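/- arXiv:1908.03019 — 5 statements merged into one kernel-verified Lean document; each statement's English description precedes it below -/
import Mathlib

section
/- Let X = ℝ₊ be the set of positive real numbers and let R : X³ → X³ be the electric network map R(x,y,z) = ( x·y/(x+z+x·y·z), x+z+x·y·z, z·y/(x+z+x·y·z) ) (which is well defined on positive reals since x+z+x·y·z > 0). Then R satisfies the functional tetrahedron equation. -/
/-- Apply `R` to components 1, 2, 3 of a 6-tuple. -/
def map123 {X : Type*} (R : X × X × X → X × X × X) :
    X × X × X × X × X × X → X × X × X × X × X × X :=
  fun (x1, x2, x3, x4, x5, x6) =>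
    ((R (x1, x2, x3)).1, (R (x1, x2, x3)).2.1, (R (x1, x2, x3)).2.2, x4, x5, x6)

/-- Apply `R` to components 1, 4, 5 of a 6-tuple. -/
def map145 {X : Type*} (R : X × X × X → X × X × X) :
    X × X × X × X × X × X → X × X × X × X × X × X :=
  fun (x1, x2, x3, x4, x5, x6) =>
    ((R (x1, x4, x5)).1, x2, x3, (R (x1, x4, x5)).2.1, (R (x1, x4, x5)).2.2, x6)

/-- Apply `R` to components 2, 4, 6 of a 6-tuple. -/
def map246 {X : Type*} (R : X × X × X → X × X × X) :
    X × X × X × X × X × X → X × X × X × X × X × X :=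
  fun (x1, x2, x3, x4, x5, x6) =>
    (x1, (R (x2, x4, x6)).1, x3, (R (x2, x4, x6)).2.1, x5, (R (x2, x4, x6)).2.2)

/-- Apply `R` to components 3, 5, 6 of a 6-tuple. -/
def map356 {X : Type*} (R : X × X × X → X × X × X) :
    X × X × X × X × X × X → X × X × X × X × X × X :=
  fun (x1, x2, x3, x4, x5, x6) =>
    (x1, x2, (R (x3, x5, x6)).1, x4, (R (x3, x5, x6)).2.1, (R (x3, x5, x6)).2.2)

/-- The functional tetrahedron equation. -/
def IsTetrahedron {X : Type*} (R : X × X × X → X × X × X) : Prop :=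
  map123 R ∘ map145 R ∘ map246 R ∘ map356 R =
    map356 R ∘ map246 R ∘ map145 R ∘ map123 R

/-- The positive real numbers. -/
abbrev PReal : Type := {x : ℝ // 0 < x}

/-- The electric network map on positive reals. -/
noncomputable def electricMap : PReal × PReal × PReal → PReal × PReal × PReal :=
  fun (⟨x, hx⟩, ⟨y, hy⟩, ⟨z, hz⟩) =>
    (⟨x * y / (x + z + x * y * z), by positivity⟩,
     ⟨x + z + x * y * z, by positivity⟩,
     ⟨z * y / (x + z + x * y * z), by positivity⟩)

/-- the electric network map satisfies the functional tetrahedron equation. -/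
theorem electricMap_tetrahedron : IsTetrahedron electricMap := by
  funext ⟨⟨a, ha⟩, ⟨b, hb⟩, ⟨c, hc⟩, ⟨d, hd⟩, ⟨e, he⟩, ⟨f, hf⟩⟩
  simp only [map123, map145, map246, map356, electricMap, Function.comp_apply, Prod.mk.injEq,
    Subtype.mk.injEq]
  -- Each component is an identity of rational functions in `a, …, f`. All denominators are
  -- subtraction-free, hence nonzero on positive reals, so they can be cleared.
  refine ⟨?_, ?_, ?_, ?_, ?_, ?_⟩ <;> field_simp <;> ring
end

section
/- Over the field ℂ, consider the map Rˣ given by Rˣ(x₁,x₂,x₃) = ( (x₁ + x₂ − x₁·x₂ − x₁·x₃)/(1 − x₁·x₃), x₁·x₃, x₂·(1 − x₁·x₃)/(x₂ + x₁ − x₁·x₂ − x₁·x₃) ), arising from the symmetry invariants of the Schwarzian KP lattice equation. Then: (i) Rˣ is an involution, i.e. Rˣ(Rˣ(x₁,x₂,x₃)) = (x₁,x₂,x₃) at every point of ℂ³ at which every denominator occurring in the formulas for Rˣ and for the composite Rˣ ∘ Rˣ is nonzero; (ii) Rˣ satisfies the functional tetrahedron equation at every point of ℂ⁶ at which every denominator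 occurring on either side of the tetrahedron identity (in all intermediate compositions) is nonzero. -/
/-- Components 1, 2, 3 of a 6-tuple. -/
def proj123 {X : Type*} : X × X × X × X × X × X → X × X × X :=
  fun (x1, x2, x3, _, _, _) => (x1, x2, x3)

/-- Components 1, 4, 5 of a 6-tuple. -/
def proj145 {X : Type*} : X × X × X × X × X × X → X × X × X :=
  fun (x1, _, _, x4, x5, _) => (x1, x4, x5)

/-- Components 2, 4, 6 of a 6-tuple. -/
def proj246 {X : Type*} : X × X × X × X × X × X → X × X × X :=
  fun (_, x2, _, x4, _, x6) => (x2, x4, x6)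

/-- Components 3, 5, 6 of a 6-tuple. -/
def proj356 {X : Type*} : X × X × X × X × X × X → X × X × X :=
  fun (_, _, x3, _, x5, x6) => (x3, x5, x6)

/-- The Schwarzian KP map over `ℂ`. -/
noncomputable def RxSKP : ℂ × ℂ × ℂ → ℂ × ℂ × ℂ :=
  fun (x1, x2, x3) =>
    ((x1 + x2 - x1 * x2 - x1 * x3) / (1 - x1 * x3), x1 * x3,
      x2 * (1 - x1 * x3) / (x2 + x1 - x1 * x2 - x1 * x3))

/-- Nonvanishing of all denominators occurring in the formulas for `RxSKP` at a point. -/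
def DenSKP : ℂ × ℂ × ℂ → Prop :=
  fun (x1, x2, x3) => 1 - x1 * x3 ≠ 0 ∧ x2 + x1 - x1 * x2 - x1 * x3 ≠ 0

/-- The relations between the input and the output of `RxSKP`, free of denominators. -/
lemma RxSKP_relations {x₁ x₂ x₃ : ℂ} (h : DenSKP (x₁, x₂, x₃)) :
    ∃ y₁ y₃ : ℂ, RxSKP (x₁, x₂, x₃) = (y₁, x₁ * x₃, y₃) ∧ 1 - x₁ * x₃ ≠ 0 ∧ y₁ ≠ 0 ∧
      (1 - y₁) * (1 - x₁ * x₃) = (1 - x₁) * (1 - x₂) ∧ y₁ * y₃ = x₂ := by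
  obtain ⟨h₁, h₂⟩ := h
  have h₃ : x₁ + x₂ - x₁ * x₂ - x₁ * x₃ ≠ 0 := by rwa [add_comm x₁ x₂]
  refine ⟨_, _, rfl, h₁, div_ne_zero h₃ h₁, ?_, ?_⟩
  · field_simp
    ring
  · rw [add_comm x₂ x₁]
    field_simp

lemma RxSKP_involution {p : ℂ × ℂ × ℂ} (hp : DenSKP p) (hq : DenSKP (RxSKP p)) :
    RxSKP (RxSKP p) = p := by
  obtain ⟨x₁, x₂, x₃⟩ := p
  obtain ⟨y₁, y₃, hy, -, -, hy₁, hy₃⟩ := RxSKP_relations hp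
  rw [hy] at hq ⊢
  obtain ⟨z₁, z₃, hz, hd, hz₀, hz₁, hz₃⟩ := RxSKP_relations hq
  rw [hz]
  rw [hy₃] at hd hz₁ ⊢
  have e₁ : z₁ = x₁ := by
    apply mul_right_cancel₀ hd
    linear_combination -hz₁ - hy₁
  subst e₁
  rw [mul_left_cancel₀ hz₀ hz₃]

/-- The second components of the two sides of the tetrahedron equation agree: both, multiplied by
`1 - x₁x₃x₆`, are equal to `x₁x₃ + (x₁ + x₂ - x₁x₂ - x₁x₃)x₅ - x₁x₃x₆`. -/
lemma second_component_eq {x₁ x₂ x₃ x₅ x₆ a₁ c₂ e₃ e₆ g₁ : ℂ}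
    (hd : 1 - x₁ * x₃ * x₆ ≠ 0)
    (ha : (1 - a₁) * (1 - x₁ * x₃) = (1 - x₁) * (1 - x₂))
    (hc : (1 - c₂) * (1 - x₁ * x₃ * x₆) = (1 - x₁ * x₃) * (1 - a₁ * x₅))
    (he : (1 - e₃) * (1 - x₃ * x₆) = (1 - x₃) * (1 - x₅)) (he₆ : e₃ * e₆ = x₅)
    (hg : (1 - g₁) * (1 - x₁ * (x₃ * x₆)) = (1 - x₁) * (1 - x₂ * e₆)) :
    g₁ * e₃ = c₂ := by
  apply mul_right_cancel₀ hd
  linear_combination (-e₃) * hg + hc - x₁ * he + x₅ * ha + x₂ * (1 - x₁) * he₆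

/-- The product of the first and third components of the right-hand side, `b₁d₃`, equals the
intermediate value `f₂`, which is the corresponding product on the left-hand side. -/
lemma first_mul_third_eq {x₁ x₂ x₃ x₄ x₅ x₆ a₁ a₃ b₁ b₅ c₂ c₆ d₃ e₃ e₆ f₂ : ℂ}
    (h₁₃ : 1 - x₁ * x₃ ≠ 0) (h₃₆ : 1 - x₃ * x₆ ≠ 0) (h₁₃₆ : 1 - x₁ * x₃ * x₆ ≠ 0)
    (ha : (1 - a₁) * (1 - x₁ * x₃) = (1 - x₁) * (1 - x₂)) (ha₃ : a₁ * a₃ = x₂)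
    (hb_den : 1 - a₁ * x₅ ≠ 0)
    (hb : (1 - b₁) * (1 - a₁ * x₅) = (1 - a₁) * (1 - x₄)) (hb₅ : b₁ * b₅ = x₄)
    (hc₀ : c₂ ≠ 0)
    (hc : (1 - c₂) * (1 - x₁ * x₃ * x₆) = (1 - x₁ * x₃) * (1 - a₁ * x₅))
    (hc₆ : c₂ * c₆ = a₁ * x₅)
    (hd_den : 1 - a₃ * c₆ ≠ 0) (hd : (1 - d₃) * (1 - a₃ * c₆) = (1 - a₃) * (1 - b₅))
    (he₀ : e₃ ≠ 0)
    (he : (1 - e₃) * (1 - x₃ * x₆) = (1 - x₃) * (1 - x₅)) (he₆ : e₃ * e₆ = x₅)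
    (hf_den : 1 - x₂ * e₆ ≠ 0) (hf : (1 - f₂) * (1 - x₂ * e₆) = (1 - x₂) * (1 - x₄)) :
    b₁ * d₃ = f₂ := by
  have hac : c₂ * (a₃ * c₆) = x₂ * x₅ := by linear_combination a₃ * hc₆ + x₅ * ha₃
  have hd_den' : c₂ - x₂ * x₅ ≠ 0 := by
    have := mul_ne_zero hc₀ hd_den
    rwa [mul_sub, mul_one, hac] at this
  have hf_den' : e₃ - x₂ * x₅ ≠ 0 := by
    have := mul_ne_zero he₀ hf_den
    rwa [mul_sub, mul_one, mul_left_comm, he₆] at this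
  have hf' : (1 - f₂) * (e₃ - x₂ * x₅) = (1 - x₂) * (1 - x₄) * e₃ := by
    linear_combination e₃ * hf + (1 - f₂) * x₂ * he₆
  have hb' : (b₁ - x₄) * (1 - a₁ * x₅) = (1 - x₄) * (a₁ * (1 - x₅)) := by
    linear_combination -hb
  have hd' : b₁ * (1 - d₃) * (c₂ - x₂ * x₅) = c₂ * (1 - a₃) * (b₁ - x₄) := by
    linear_combination b₁ * c₂ * hd + b₁ * (1 - d₃) * hac - c₂ * (1 - a₃) * hb₅
  have hbd : b₁ * (1 - d₃) * (c₂ - x₂ * x₅) * (1 - a₁ * x₅) =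
      c₂ * (1 - x₄) * (1 - x₅) * (a₁ - x₂) := by
    linear_combination (1 - a₁ * x₅) * hd' + c₂ * (1 - a₃) * hb'
      - c₂ * (1 - x₄) * (1 - x₅) * ha₃
  -- What remains is an identity between rational functions of the `xᵢ`.
  have key : (1 - x₂) * e₃ * (c₂ - x₂ * x₅) * (1 - a₁ * x₅) =
      (e₃ - x₂ * x₅) * ((1 - a₁) * (c₂ - x₂ * x₅) + (1 - x₅) * (a₁ - x₂) * c₂) := by
    have ea : a₁ * (1 - x₁ * x₃) = x₁ + x₂ - x₁ * x₂ - x₁ * x₃ := by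
      linear_combination -ha
    have ee : e₃ * (1 - x₃ * x₆) = x₃ + x₅ - x₃ * x₅ - x₃ * x₆ := by
      linear_combination -he
    have ec : c₂ * (1 - x₁ * x₃ * x₆) =
        x₁ * x₃ + (x₁ + x₂ - x₁ * x₂ - x₁ * x₃) * x₅ - x₁ * x₃ * x₆ := by
      linear_combination -hc + x₅ * ea
    -- Multiply by all denominators, each next to its numerator, so that `ea`, `ee`, `ec` apply.
    have cleared : (1 - x₂) * (e₃ * (1 - x₃ * x₆)) *
          (c₂ * (1 - x₁ * x₃ * x₆) - x₂ * x₅ * (1 - x₁ * x₃ * x₆)) *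
          ((1 - x₁ * x₃) - a₁ * (1 - x₁ * x₃) * x₅) =
        (e₃ * (1 - x₃ * x₆) - x₂ * x₅ * (1 - x₃ * x₆)) *
          (((1 - x₁ * x₃) - a₁ * (1 - x₁ * x₃)) *
              (c₂ * (1 - x₁ * x₃ * x₆) - x₂ * x₅ * (1 - x₁ * x₃ * x₆)) +
            (1 - x₅) * (a₁ * (1 - x₁ * x₃) - x₂ * (1 - x₁ * x₃)) *
              (c₂ * (1 - x₁ * x₃ * x₆))) := by
      rw [ea, ee, ec]
      ring
    apply mul_right_cancel₀ (mul_ne_zero (mul_ne_zero h₁₃ h₃₆) h₁₃₆)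
    linear_combination cleared
  apply mul_right_cancel₀ (mul_ne_zero (mul_ne_zero hf_den' hd_den') hb_den)
  linear_combination (-(e₃ - x₂ * x₅)) * hbd - (e₃ - x₂ * x₅) * (c₂ - x₂ * x₅) * hb
    + (c₂ - x₂ * x₅) * (1 - a₁ * x₅) * hf' + (1 - x₄) * key

/-- (i) `RxSKP` is an involution wherever all denominators of `RxSKP` and of
`RxSKP ∘ RxSKP` are nonzero; (ii) `RxSKP` satisfies the functional tetrahedron equation at
every point of `ℂ⁶` at which every denominator occurring in all intermediate compositions,
on either side, is nonzero. -/
theorem RxSKP_involution_tetrahedron :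
    (∀ p : ℂ × ℂ × ℂ, DenSKP p → DenSKP (RxSKP p) → RxSKP (RxSKP p) = p) ∧
    (∀ p : ℂ × ℂ × ℂ × ℂ × ℂ × ℂ,
      DenSKP (proj356 p) →
      DenSKP (proj246 (map356 RxSKP p)) →
      DenSKP (proj145 (map246 RxSKP (map356 RxSKP p))) →
      DenSKP (proj123 (map145 RxSKP (map246 RxSKP (map356 RxSKP p)))) →
      DenSKP (proj123 p) →
      DenSKP (proj145 (map123 RxSKP p)) →
      DenSKP (proj246 (map145 RxSKP (map123 RxSKP p))) →
      DenSKP (proj356 (map246 RxSKP (map145 RxSKP (map123 RxSKP p)))) →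
      map123 RxSKP (map145 RxSKP (map246 RxSKP (map356 RxSKP p))) =
        map356 RxSKP (map246 RxSKP (map145 RxSKP (map123 RxSKP p)))) := by
  refine ⟨fun p hp hq => RxSKP_involution hp hq, ?_⟩
  rintro ⟨x₁, x₂, x₃, x₄, x₅, x₆⟩ l₁ l₂ l₃ l₄ r₁ r₂ r₃ r₄
  obtain ⟨e₃, e₆, Ee, he_den, he₀, he, he₆⟩ := RxSKP_relations (x₁ := x₃) (x₂ := x₅) (x₃ := x₆) l₁
  simp only [map356, proj246, Ee] at l₂
  obtain ⟨f₂, f₆, Ef, hf_den, hf₀, hf, hf₆⟩ := RxSKP_relations l₂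
  simp only [map356, map246, proj145, Ee, Ef] at l₃
  obtain ⟨g₁, g₅, Eg, hg_den, hg₀, hg, hg₅⟩ := RxSKP_relations l₃
  simp only [map356, map246, map145, proj123, Ee, Ef, Eg] at l₄
  obtain ⟨h₁, h₃, Eh, hh_den, hh₀, hh, hh₃⟩ := RxSKP_relations l₄
  obtain ⟨a₁, a₃, Ea, ha_den, ha₀, ha, ha₃⟩ := RxSKP_relations (x₁ := x₁) (x₂ := x₂) (x₃ := x₃) r₁
  simp only [map123, proj145, Ea] at r₂
  obtain ⟨b₁, b₅, Eb, hb_den, hb₀, hb, hb₅⟩ := RxSKP_relations r₂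
  simp only [map123, map145, proj246, Ea, Eb] at r₃
  obtain ⟨c₂, c₆, Ec, hc_den, hc₀, hc, hc₆⟩ := RxSKP_relations r₃
  simp only [map123, map145, map246, proj356, Ea, Eb, Ec] at r₄
  obtain ⟨d₃, d₆, Ed, hd_den, hd₀, hd, hd₆⟩ := RxSKP_relations r₄
  simp only [map123, map145, map246, map356, Ea, Eb, Ec, Ed, Ee, Ef, Eg, Eh]
  have q₂ : g₁ * e₃ = c₂ := second_component_eq hc_den ha hc he he₆ hg
  have q₁₃ : b₁ * d₃ = f₂ := first_mul_third_eq ha_den he_den hc_den ha ha₃ hb_den hb hb₅ hc₀ hc hc₆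
    hd_den hd he₀ he he₆ hf_den hf
  have q₁ : h₁ = b₁ := by
    -- `1 - g₁e₃ = 1 - c₂` is a nonzero multiple of `(1 - x₁x₃)(1 - a₁x₅)`.
    have hP : (1 - x₁ * x₃) * (1 - a₁ * x₅) ≠ 0 := mul_ne_zero ha_den hb_den
    apply mul_right_cancel₀ hP
    have hh' : (1 - h₁) * ((1 - x₁ * x₃) * (1 - a₁ * x₅)) =
        (1 - x₁) * (1 - x₂) * (1 - x₄) := by
      rw [q₂] at hh
      linear_combination (1 - x₁ * x₃ * x₆) * hh - (1 - h₁) * hc + (1 - f₂) * hg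
        + (1 - x₁) * hf
    linear_combination -hh' + (1 - x₁ * x₃) * hb + (1 - x₄) * ha
  have q₃ : h₃ = d₃ := by
    apply mul_left_cancel₀ hh₀
    rw [hh₃, q₁, q₁₃]
  have q₅ : g₅ = a₃ * c₆ := by
    apply mul_left_cancel₀ (mul_ne_zero hg₀ he₀)
    linear_combination e₃ * hg₅ + x₂ * he₆ - a₃ * c₆ * q₂ - a₃ * hc₆ - x₅ * ha₃
  have q₆ : f₆ = d₆ := by
    apply mul_left_cancel₀ hf₀
    linear_combination hf₆ - hb₅ - b₁ * hd₆ + d₆ * q₁₃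
  rw [q₂, q₁, q₃, q₅, q₆, mul_assoc]
end

section
/- Let X = ℝ₊ be the positive reals and let Rˣ : X³ → X³ be the totally positive map Rˣ(x₁,x₂,x₃) = ( x₁·x₂·(1+x₃)/(x₁ + x₃ + x₁·x₃), x₁ + x₃ + x₁·x₃, x₂·x₃/(x₃ + x₁·(1+x₂)·(1+x₃)) ). Then Rˣ satisfies the functional tetrahedron equation and is reversible, i.e. τ₁₃ ∘ Rˣ ∘ τ₁₃ ∘ Rˣ = Id, where τ₁₃(x,y,z) = (z,y,x). -/
/-- The permutation of the first and third components of a triple. -/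
def tau13 {X : Type*} : X × X × X → X × X × X := fun (x, y, z) => (z, y, x)

/-- The totally positive tetrahedron map obtained from discrete potential KP. -/
noncomputable def Rx3b : PReal × PReal × PReal → PReal × PReal × PReal :=
  fun (⟨x1, hx1⟩, ⟨x2, hx2⟩, ⟨x3, hx3⟩) =>
    (⟨x1 * x2 * (1 + x3) / (x1 + x3 + x1 * x3), by positivity⟩,
     ⟨x1 + x3 + x1 * x3, by positivity⟩,
     ⟨x2 * x3 / (x3 + x1 * (1 + x2) * (1 + x3)), by positivity⟩)

/-- The relations between input `a` and output `b` of `Rx3b` in the coordinates `1 + x`. -/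
def ShiftedRel (a1 a2 a3 b1 b2 b3 : ℝ) : Prop :=
  b2 = a1 * a3 ∧ b1 * b3 = a2 ∧ b1 * (a1 * a3 - 1) = a3 - 1 + (a1 - 1) * a2 * a3

lemma shiftedRel_Rx3b (x y z : PReal) :
    ShiftedRel (1 + x) (1 + y) (1 + z) (1 + (Rx3b (x, y, z)).1) (1 + (Rx3b (x, y, z)).2.1)
      (1 + (Rx3b (x, y, z)).2.2) := by
  obtain ⟨x, hx⟩ := x
  obtain ⟨y, hy⟩ := y
  obtain ⟨z, hz⟩ := z
  simp only [Rx3b, ShiftedRel]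
  refine ⟨?_, ?_, ?_⟩
  · ring
  · field_simp
    ring
  · field_simp
    ring

lemma mul_sub_one_ne_zero {x y : ℝ} (hx : 1 < x) (hy : 1 < y) : x * y - 1 ≠ 0 :=
  (sub_pos.2 (one_lt_mul_of_lt_of_le hx hy.le)).ne'

/-- The single identity behind the first and third components of the tetrahedron equation. Here
`b1`, `d2` come from the side applying `123` first, and `p3` from the side applying `356` first. -/
lemma intermediate_identity {a1 a2 a3 a5 a6 b1 d2 p3 : ℝ}
    (h13 : a1 * a3 - 1 ≠ 0) (h36 : a3 * a6 - 1 ≠ 0) (h136 : a1 * a3 * a6 - 1 ≠ 0)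
    (hb : b1 * (a1 * a3 - 1) = a3 - 1 + (a1 - 1) * a2 * a3)
    (hd : d2 * (a1 * a3 * a6 - 1) = a6 - 1 + (a1 * a3 - 1) * b1 * a5 * a6)
    (hp : p3 * (a3 * a6 - 1) = a6 - 1 + (a3 - 1) * a5 * a6) :
    a5 * (a2 + a2 * b1 * p3 + b1 * d2 - b1 * p3 - a2 * d2 - a2 * b1)
      + (d2 * p3 + b1 * p3 + a2 * d2 - b1 * p3 * d2 - d2 - p3 * a2) = 0 := by
  -- The left side has degree one in each of `d2`, `p3`, `b1`; they are eliminated in this order.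
  apply mul_left_cancel₀ (mul_ne_zero (mul_ne_zero h13 h36) h136)
  linear_combination
    (a1 * a3 - 1) * (a3 * a6 - 1) * (a2 - 1 - a2 * a5 + a5 * b1 + p3 - b1 * p3)
      * (hd + a5 * a6 * hb)
    + (a1 * a3 - 1) * ((a6 - 1 + (a3 - 1 + (a1 - 1) * a2 * a3) * a5 * a6) * (1 - b1)
      + (a1 * a3 * a6 - 1) * (-a2 + (a2 * a5 - a5 + 1) * b1)) * hp
    + ((a6 - 1 + (a3 - 1 + (a1 - 1) * a2 * a3) * a5 * a6)
        * (a5 * (a3 * a6 - 1) - (a6 - 1 + (a3 - 1) * a5 * a6))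
      + (a1 * a3 * a6 - 1) * (-a2 * a5 * (a3 * a6 - 1)
        + (a2 * a5 - a5 + 1) * (a6 - 1 + (a3 - 1) * a5 * a6))) * hb

/-- The tetrahedron equation in shifted coordinates. The values `b, c, d, e` arise from applying the
map to the indices `123`, `145`, `246`, `356` in this order, and `p, q, r, s` from the opposite
order. -/
lemma tetrahedron_of_shiftedRel
    {a1 a2 a3 a4 a5 a6 b1 b2 b3 c1 c4 c5 d2 d4 d6 e3 e5 e6 : ℝ}
    {p3 p5 p6 q2 q4 q6 r1 r4 r5 s1 s2 s3 : ℝ}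
    (h1 : 1 < a1) (h2 : 1 < a2) (h3 : 1 < a3) (h5 : 1 < a5) (h6 : 1 < a6)
    (hb1 : 1 < b1) (hb3 : 1 < b3) (hc1 : 1 < c1) (hd2 : 1 < d2) (hd6 : 1 < d6) (he3 : 1 < e3)
    (hp3 : 1 < p3) (hp6 : 1 < p6)
    (hb : ShiftedRel a1 a2 a3 b1 b2 b3) (hc : ShiftedRel b1 a4 a5 c1 c4 c5)
    (hd : ShiftedRel b2 c4 a6 d2 d4 d6) (he : ShiftedRel b3 c5 d6 e3 e5 e6)
    (hp : ShiftedRel a3 a5 a6 p3 p5 p6) (hq : ShiftedRel a2 a4 p6 q2 q4 q6)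
    (hr : ShiftedRel a1 q4 p5 r1 r4 r5) (hs : ShiftedRel r1 q2 p3 s1 s2 s3) :
    s1 = c1 ∧ s2 = d2 ∧ s3 = e3 ∧ r4 = d4 ∧ r5 = e5 ∧ q6 = e6 := by
  obtain ⟨rfl, hbm, hbf⟩ := hb
  obtain ⟨rfl, hcm, hcf⟩ := hc
  obtain ⟨rfl, hdm, hdf⟩ := hd
  obtain ⟨rfl, hem, hef⟩ := he
  obtain ⟨rfl, hpm, hpf⟩ := hp
  obtain ⟨rfl, hqm, hqf⟩ := hq
  obtain ⟨rfl, hrm, hrf⟩ := hr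
  obtain ⟨rfl, hsm, hsf⟩ := hs
  have n13 : a1 * a3 - 1 ≠ 0 := mul_sub_one_ne_zero h1 h3
  have n36 : a3 * a6 - 1 ≠ 0 := mul_sub_one_ne_zero h3 h6
  have n136 : a1 * a3 * a6 - 1 ≠ 0 :=
    mul_sub_one_ne_zero (one_lt_mul_of_lt_of_le h1 h3.le) h6
  have nb5 : b1 * a5 - 1 ≠ 0 := mul_sub_one_ne_zero hb1 h5
  have nd2 : d2 - 1 ≠ 0 := (sub_pos.2 hd2).ne'
  -- the second coordinate of the output
  have key2 : r1 * p3 = d2 := by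
    apply mul_right_cancel₀ n136
    linear_combination p3 * hrf + hpf - hdf - a5 * a6 * hbf + (a1 - 1) * a2 * a3 * a6 * hpm
  have n25 : a2 * a5 - p3 ≠ 0 := by
    have : a2 * a5 - p3 = p3 * (a2 * p6 - 1) := by linear_combination -a2 * hpm
    rw [this]
    exact mul_ne_zero (by positivity) (mul_sub_one_ne_zero h2 hp6)
  have prod25 : d2 * (b3 * d6) = a2 * a5 := by
    linear_combination b3 * hdm + a5 * hbm
  have n25' : a2 * a5 - d2 ≠ 0 := by
    have : a2 * a5 - d2 = d2 * (b3 * d6 - 1) := by linear_combination -prod25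
    rw [this]
    exact mul_ne_zero (by positivity) (mul_sub_one_ne_zero hb3 hd6)
  have L := intermediate_identity (a5 := a5) (d2 := d2) n13 n36 n136 hbf
    (by linear_combination hdf) hpf
  -- `q2`, `s1` and `c1 * e3` as fractions free of `p6`, `r1` and of `b3`, `c5`, `d6` respectively
  have hq2 : q2 * (a2 * a5 - p3) = a5 - p3 + (a2 - 1) * a4 * a5 := by
    linear_combination p3 * hqf + (1 + (a2 - 1) * a4 - a2 * q2) * hpm
  have hs1 : s1 * (d2 - 1) = p3 - 1 + (d2 - p3) * q2 := by
    linear_combination hsf + (q2 - s1) * key2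
  have he3' : c1 * e3 * (a2 * a5 - d2) = c1 * (b1 * a5 - d2) + (a2 - b1) * a4 * a5 := by
    linear_combination c1 * d2 * hef - c1 * e3 * prod25 + c1 * hdm
      + (b3 - 1) * d2 * d6 * hcm + (b3 - 1) * a4 * hdm + a4 * a5 * hbm
  have key1 : s1 = c1 := by
    apply mul_right_cancel₀ (mul_ne_zero (mul_ne_zero nd2 nb5) n25)
    linear_combination (b1 * a5 - 1) * (a2 * a5 - p3) * hs1 + (d2 - p3) * (b1 * a5 - 1) * hq2
      - (d2 - 1) * (a2 * a5 - p3) * hcf + a5 * (1 - a4) * L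
  have key13 : c1 * e3 = q2 := by
    apply mul_right_cancel₀ (mul_ne_zero (mul_ne_zero n25' nb5) n25)
    linear_combination (b1 * a5 - 1) * (a2 * a5 - p3) * he3'
      - (a2 * a5 - d2) * (b1 * a5 - 1) * hq2
      + (b1 * a5 - d2) * (a2 * a5 - p3) * hcf + a5 * (1 - a4) * L
  have hc0 : c1 ≠ 0 := by positivity
  refine ⟨key1, key2, ?_, by ring, ?_, ?_⟩
  · apply mul_left_cancel₀ hc0
    rw [key13, ← hsm, key1]
  · have hd0 : d2 ≠ 0 := by positivity
    apply mul_left_cancel₀ hd0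
    linear_combination p3 * hrm + a2 * hpm - prod25 - r5 * key2
  · apply mul_left_cancel₀ (mul_ne_zero hc0 (by positivity : e3 ≠ 0))
    linear_combination q6 * key13 + hqm - hcm - c1 * hem

/-- `Rx3b` satisfies the functional tetrahedron equation and is reversible. -/
theorem Rx3b_tetrahedron_reversible :
    IsTetrahedron Rx3b ∧ (tau13 ∘ Rx3b ∘ tau13 ∘ Rx3b = id) := by
  constructor
  · funext ⟨x1, x2, x3, x4, x5, x6⟩
    have gt (x : PReal) : 1 < 1 + (x : ℝ) := lt_add_of_pos_right 1 x.2
    obtain ⟨k1, k2, k3, k4, k5, k6⟩ := tetrahedron_of_shiftedRel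
      (gt _) (gt _) (gt _) (gt _) (gt _) (gt _) (gt _) (gt _) (gt _) (gt _) (gt _) (gt _) (gt _)
      (shiftedRel_Rx3b x1 x2 x3) (shiftedRel_Rx3b _ x4 x5)
      (shiftedRel_Rx3b _ _ x6) (shiftedRel_Rx3b _ _ _)
      (shiftedRel_Rx3b x3 x5 x6) (shiftedRel_Rx3b x2 x4 _)
      (shiftedRel_Rx3b x1 _ _) (shiftedRel_Rx3b _ _ _)
    simp only [Function.comp, map123, map145, map246, map356, Prod.mk.injEq]
    exact ⟨Subtype.ext (add_left_cancel k1), Subtype.ext (add_left_cancel k2),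
      Subtype.ext (add_left_cancel k3), Subtype.ext (add_left_cancel k4),
      Subtype.ext (add_left_cancel k5), Subtype.ext (add_left_cancel k6)⟩
  · funext ⟨⟨a, ha⟩, ⟨b, hb⟩, ⟨c, hc⟩⟩
    simp only [Function.comp, tau13, Rx3b, Prod.mk.injEq, Subtype.mk.injEq, id]
    refine ⟨?_, ?_, ?_⟩ <;> field_simp <;> ring
end

section
/- Over the field ℂ, let R_{χ₄} be the map sending ((x₁,y₁),(x₂,y₂),(x₃,y₃)) to ((u₁,v₁),(u₂,v₂),(u₃,v₃)) with Q = x₂ + x₁·(1 − x₂ − x₃), u₁ = Q/(1 − x₁·x₃), u₂ = x₁·x₃, u₃ = x₂·(1 − x₁·x₃)/Q, v₁ = x₃·y₂, v₂ = Q·y₃/(1 − x₁·x₃), v₃ = y₂/x₁, and let R_{χ₅} be the map with Q' = (x₁ − 1)·x₂ + x₁·x₃, u₁ = Q'/(x₁·x₃), u₂ = x₁·x₃, u₃ = x₁·x₂·x₃/Q', v₁ = x₃·y₂, v₂ = Q'·y₃/(x₁·x₃), v₃ = y₂/x₁. Then the entwining tetrahedron relation R_{χ₄}^(123) ∘ R_{χ₅}^(145)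 ∘ R_{χ₅}^(246) ∘ R_{χ₅}^(356) = R_{χ₅}^(356) ∘ R_{χ₅}^(246) ∘ R_{χ₅}^(145) ∘ R_{χ₄}^(123) holds at every point of (ℂ²)⁶ at which every denominator occurring on either side (in all intermediate compositions) is nonzero. -/
/-- The map obtained from the discrete modified KP equation, over `ℂ`. -/
noncomputable def Rchi4 : (ℂ × ℂ) × (ℂ × ℂ) × (ℂ × ℂ) → (ℂ × ℂ) × (ℂ × ℂ) × (ℂ × ℂ) :=
  fun ((x1, _y1), (x2, y2), (x3, y3)) =>
    (((x2 + x1 * (1 - x2 - x3)) / (1 - x1 * x3), x3 * y2),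
     (x1 * x3, (x2 + x1 * (1 - x2 - x3)) * y3 / (1 - x1 * x3)),
     (x2 * (1 - x1 * x3) / (x2 + x1 * (1 - x2 - x3)), y2 / x1))

/-- Nonvanishing of all denominators occurring in the formulas for `Rchi4` at a point. -/
def Den4 : (ℂ × ℂ) × (ℂ × ℂ) × (ℂ × ℂ) → Prop :=
  fun ((x1, _), (x2, _), (x3, _)) =>
    1 - x1 * x3 ≠ 0 ∧ x2 + x1 * (1 - x2 - x3) ≠ 0 ∧ x1 ≠ 0

/-- The map obtained from the lattice equation `χ₅`, over `ℂ`. -/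
noncomputable def Rchi5 : (ℂ × ℂ) × (ℂ × ℂ) × (ℂ × ℂ) → (ℂ × ℂ) × (ℂ × ℂ) × (ℂ × ℂ) :=
  fun ((x1, _y1), (x2, y2), (x3, y3)) =>
    ((((x1 - 1) * x2 + x1 * x3) / (x1 * x3), x3 * y2),
     (x1 * x3, ((x1 - 1) * x2 + x1 * x3) * y3 / (x1 * x3)),
     (x1 * x2 * x3 / ((x1 - 1) * x2 + x1 * x3), y2 / x1))

/-- Nonvanishing of all denominators occurring in the formulas for `Rchi5` at a point. -/
def Den5 : (ℂ × ℂ) × (ℂ × ℂ) × (ℂ × ℂ) → Prop :=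
  fun ((x1, _), (x2, _), (x3, _)) =>
    x1 * x3 ≠ 0 ∧ (x1 - 1) * x2 + x1 * x3 ≠ 0 ∧ x1 ≠ 0

/-- `Rchi5` with its denominator polynomial replaced by an equal, typically factored, value `N`. -/
lemma Rchi5_eq_of {a b c y₁ y₂ y₃ N : ℂ} (h : (a - 1) * b + a * c = N) :
    Rchi5 ((a, y₁), (b, y₂), (c, y₃)) =
      ((N / (a * c), c * y₂), (a * c, N * y₃ / (a * c)), (a * b * c / N, y₂ / a)) := by
  simp only [Rchi5, h]

/-- `Rchi4` with its two denominator polynomials replaced by equal values `N` and `D`. -/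
lemma Rchi4_eq_of {a b c y₁ y₂ y₃ N D : ℂ} (hN : b + a * (1 - b - c) = N)
    (hD : 1 - a * c = D) :
    Rchi4 ((a, y₁), (b, y₂), (c, y₃)) =
      ((N / D, c * y₂), (a * c, N * y₃ / D), (b * D / N, y₂ / a)) := by
  simp only [Rchi4, hN, hD]

/-- the entwining tetrahedron relation between `Rchi4` and `Rchi5` holds at
every point at which all denominators occurring in all intermediate compositions on either
side are nonzero. -/
theorem entwining_chi4_chi5 :
    ∀ p : (ℂ × ℂ) × (ℂ × ℂ) × (ℂ × ℂ) × (ℂ × ℂ) × (ℂ × ℂ) × (ℂ × ℂ),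
      Den5 (proj356 p) →
      Den5 (proj246 (map356 Rchi5 p)) →
      Den5 (proj145 (map246 Rchi5 (map356 Rchi5 p))) →
      Den4 (proj123 (map145 Rchi5 (map246 Rchi5 (map356 Rchi5 p)))) →
      Den4 (proj123 p) →
      Den5 (proj145 (map123 Rchi4 p)) →
      Den5 (proj246 (map145 Rchi5 (map123 Rchi4 p))) →
      Den5 (proj356 (map246 Rchi5 (map145 Rchi5 (map123 Rchi4 p)))) →
      map123 Rchi4 (map145 Rchi5 (map246 Rchi5 (map356 Rchi5 p))) =
        map356 Rchi5 (map246 Rchi5 (map145 Rchi5 (map123 Rchi4 p))) := by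
  rintro ⟨⟨x1, y1⟩, ⟨x2, y2⟩, ⟨x3, y3⟩, ⟨x4, y4⟩, ⟨x5, y5⟩, ⟨x6, y6⟩⟩ h1 h2 h3 h4 k1 k2 k3 k4
  obtain ⟨A, hA⟩ : ∃ A, (x3 - 1) * x5 + x3 * x6 = A := ⟨_, rfl⟩
  obtain ⟨B, hB⟩ : ∃ B, (x2 - 1) * x4 * A + x2 * x3 * x5 * x6 = B := ⟨_, rfl⟩
  obtain ⟨C, hC⟩ : ∃ C, (x1 - 1) * x2 * x5 + x1 * A = C := ⟨_, rfl⟩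
  obtain ⟨Q, hQ⟩ : ∃ Q, x2 + x1 * (1 - x2 - x3) = Q := ⟨_, rfl⟩
  obtain ⟨T, hT⟩ : ∃ T, 1 - x1 * x3 = T := ⟨_, rfl⟩
  obtain ⟨E, hE⟩ : ∃ E, Q * x5 - (x1 - 1) * (x2 - 1) * x4 = E := ⟨_, rfl⟩
  have id1 : x1 * x3 * x6 - C = x5 * Q := by subst hC hA hQ; ring
  have id2 : (x1 - 1) * B + (x3 - 1) * x5 * C = -(A * E) := by
    subst hE hB hC hA hQ; ring
  have id3 : (x2 * T - Q) * x4 * C + x1 * x2 * x3 * x6 * E = x1 * Q * B := by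
    subst hE hB hC hA hQ hT; ring
  -- Left composition; each nonvanishing hypothesis yields that of the next factor.
  simp only [Den5, proj356, hA] at h1
  obtain ⟨h36, hA0, hx3⟩ := h1
  have hx6 : x6 ≠ 0 := right_ne_zero_of_mul h36
  have L1 : map356 Rchi5 ((x1, y1), (x2, y2), (x3, y3), (x4, y4), (x5, y5), (x6, y6)) =
      ((x1, y1), (x2, y2), (A / (x3 * x6), x6 * y5), (x4, y4), (x3 * x6, A * y6 / (x3 * x6)),
        (x3 * x5 * x6 / A, y5 / x3)) := by
    simp only [map356, Rchi5_eq_of hA]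
  rw [L1] at h2 h3 h4 ⊢
  have e2 : (x2 - 1) * x4 + x2 * (x3 * x5 * x6 / A) = B / A := by
    rw [← hB]; field_simp
  simp only [Den5, proj246, e2] at h2
  obtain ⟨h26, hB0, hx2⟩ := h2
  have hB0 : B ≠ 0 := fun h => hB0 (by simp [h])
  have hx5 : x5 ≠ 0 := fun h => h26 (by simp [h])
  have L2 : map246 Rchi5 ((x1, y1), (x2, y2), (A / (x3 * x6), x6 * y5), (x4, y4),
        (x3 * x6, A * y6 / (x3 * x6)), (x3 * x5 * x6 / A, y5 / x3)) =
      ((x1, y1), (B / (x2 * x3 * x5 * x6), x3 * x5 * x6 * y4 / A), (A / (x3 * x6), x6 * y5),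
        (x2 * x3 * x5 * x6 / A, B * y5 / (x2 * x3 * x5 * x6 * x3)),
        (x3 * x6, A * y6 / (x3 * x6)),
        (x2 * x3 * x4 * x5 * x6 / B, y4 / x2)) := by
    simp only [map246, Rchi5_eq_of e2, Prod.mk.injEq, true_and, and_true]
    constructorm* _ ∧ _ <;> field_simp
  rw [L2] at h3 h4 ⊢
  have e3 : (x1 - 1) * (x2 * x3 * x5 * x6 / A) + x1 * (x3 * x6) = x3 * x6 * C / A := by
    rw [← hC]; field_simp
  simp only [Den5, proj145, e3] at h3
  obtain ⟨-, hC0, hx1⟩ := h3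
  have hC0 : C ≠ 0 := fun h => hC0 (by simp [h])
  have L3 : map145 Rchi5 ((x1, y1), (B / (x2 * x3 * x5 * x6), x3 * x5 * x6 * y4 / A),
        (A / (x3 * x6), x6 * y5),
        (x2 * x3 * x5 * x6 / A, B * y5 / (x2 * x3 * x5 * x6 * x3)),
        (x3 * x6, A * y6 / (x3 * x6)),
        (x2 * x3 * x4 * x5 * x6 / B, y4 / x2)) =
      ((C / (x1 * A), B * y5 / (x2 * x3 * x5)),
        (B / (x2 * x3 * x5 * x6), x3 * x5 * x6 * y4 / A), (A / (x3 * x6), x6 * y5),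
        (x1 * x3 * x6, C * y6 / (x1 * x3 * x6)),
        (x1 * x2 * x3 * x5 * x6 / C, B * y5 / (x1 * x2 * x3 * x5 * x6 * x3)),
        (x2 * x3 * x4 * x5 * x6 / B, y4 / x2)) := by
    simp only [map145, Rchi5_eq_of e3, Prod.mk.injEq, true_and, and_true]
    constructorm* _ ∧ _ <;> field_simp
  rw [L3] at h4 ⊢
  have e4 : B / (x2 * x3 * x5 * x6) +
      C / (x1 * A) * (1 - B / (x2 * x3 * x5 * x6) - A / (x3 * x6)) = E / (x1 * x3 * x6) := by
    field_simp
    linear_combination B * hC + C * x2 * x5 * hA - x2 * x5 * id2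
  have e4' : 1 - C / (x1 * A) * (A / (x3 * x6)) = x5 * Q / (x1 * x3 * x6) := by
    rw [← id1]; field_simp
  simp only [Den4, proj123, e4, e4'] at h4
  obtain ⟨hQ0, hE0, -⟩ := h4
  have hQ0 : Q ≠ 0 := fun h => hQ0 (by simp [h])
  have hE0 : E ≠ 0 := fun h => hE0 (by simp [h])
  -- Right composition; besides `T`, its denominators only involve factors already known to be
  -- nonzero.
  simp only [Den4, proj123, hQ, hT] at k1
  have hT0 : T ≠ 0 := k1.1
  have R1 : map123 Rchi4 ((x1, y1), (x2, y2), (x3, y3), (x4, y4), (x5, y5), (x6, y6)) =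
      ((Q / T, x3 * y2), (x1 * x3, Q * y3 / T), (x2 * T / Q, y2 / x1), (x4, y4), (x5, y5),
        (x6, y6)) := by
    simp only [map123, Rchi4_eq_of hQ hT]
  have f2 : (Q / T - 1) * x4 + Q / T * x5 = E / T := by
    rw [← hE]; field_simp; subst hQ hT; ring
  have R2 : map145 Rchi5 ((Q / T, x3 * y2), (x1 * x3, Q * y3 / T), (x2 * T / Q, y2 / x1), (x4, y4),
        (x5, y5), (x6, y6)) =
      ((E / (Q * x5), x5 * y4), (x1 * x3, Q * y3 / T), (x2 * T / Q, y2 / x1),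
        (Q * x5 / T, E * y5 / (Q * x5)), (Q * x4 * x5 / E, T * y4 / Q), (x6, y6)) := by
    simp only [map145, Rchi5_eq_of f2, Prod.mk.injEq, true_and, and_true]
    constructorm* _ ∧ _ <;> field_simp
  have f3 : (x1 * x3 - 1) * (Q * x5 / T) + x1 * x3 * x6 = C := by
    have : x1 * x3 - 1 = -T := by rw [← hT]; ring
    rw [this]; field_simp; linear_combination id1
  have R3 : map246 Rchi5 ((E / (Q * x5), x5 * y4), (x1 * x3, Q * y3 / T), (x2 * T / Q, y2 / x1),
        (Q * x5 / T, E * y5 / (Q * x5)), (Q * x4 * x5 / E, T * y4 / Q), (x6, y6)) =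
      ((E / (Q * x5), x5 * y4), (C / (x1 * x3 * x6), x6 * E * y5 / (Q * x5)),
        (x2 * T / Q, y2 / x1), (x1 * x3 * x6, C * y6 / (x1 * x3 * x6)),
        (Q * x4 * x5 / E, T * y4 / Q),
        (x1 * x3 * x6 * Q * x5 / (T * C), E * y5 / (x1 * x3 * Q * x5))) := by
    simp only [map246, Rchi5_eq_of f3, Prod.mk.injEq, true_and]
    constructorm* _ ∧ _ <;> field_simp
  have f4 : (x2 * T / Q - 1) * (Q * x4 * x5 / E) +
      x2 * T / Q * (x1 * x3 * x6 * Q * x5 / (T * C)) = x1 * x5 * Q * B / (E * C) := by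
    field_simp
    linear_combination id3
  rw [R1, R2, R3]
  simp only [map123, map356, Rchi4_eq_of e4 e4', Rchi5_eq_of f4, Prod.mk.injEq, true_and]
  constructorm* _ ∧ _ <;> field_simp
end

section
/- Let X = ℝ₊ be the positive reals and let R : X³ → X³ be the map obtained from the joint invariants of the full symmetry group of the discrete potential KP equation on ℤ⁴: R(x,y,z) = ( x·y/(x + z + x·z), x + z + x·z, y·z·(1+x)/(x + z + x·y + x·z) ) (all denominators are strictly positive on positive reals). Then R satisfies the functional tetrahedron equation. -/
/-- The tetrahedron map obtained from the joint invariants of the full symmetry group of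
discrete potential KP on `ℤ⁴`, on positive reals. -/
noncomputable def jointKPMap : PReal × PReal × PReal → PReal × PReal × PReal :=
  fun (⟨x, hx⟩, ⟨y, hy⟩, ⟨z, hz⟩) =>
    (⟨x * y / (x + z + x * z), by positivity⟩,
     ⟨x + z + x * z, by positivity⟩,
     ⟨y * z * (1 + x) / (x + z + x * y + x * z), by positivity⟩)

/-- Relations between an input `(x, y, z)` of `jointKPMap` and its image `(u, v, w)`, together with
the positivity of all six numbers. -/
structure KPRel (x y z u v w : ℝ) : Prop where
  x_pos : 0 < x
  y_pos : 0 < y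
  z_pos : 0 < z
  u_pos : 0 < u
  v_pos : 0 < v
  w_pos : 0 < w
  one_add_v : 1 + v = (1 + x) * (1 + z)
  one_add_u_mul : (1 + u) * (1 + w) = 1 + y
  u_mul_v : u * v = x * y
  w_mul : w * x * (1 + u) = z * u * (1 + x)

theorem jointKPMap_rel (x y z : PReal) :
    KPRel x y z (jointKPMap (x, y, z)).1 (jointKPMap (x, y, z)).2.1
      (jointKPMap (x, y, z)).2.2 := by
  refine ⟨x.2, y.2, z.2, Subtype.prop _, Subtype.prop _, Subtype.prop _, ?_, ?_, ?_, ?_⟩ <;>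
  · obtain ⟨x, hx⟩ := x
    obtain ⟨y, hy⟩ := y
    obtain ⟨z, hz⟩ := z
    simp only [jointKPMap]
    field_simp
    try ring

/-- The triangular system satisfied by the input `(a, b, c, d, e, f)` and the output
`(a', b', c', d', e', f')` of either side of the tetrahedron equation. -/
structure SixRel (a b c d e f a' b' c' d' e' f' : ℝ) : Prop where
  a_pos : 0 < a
  a'_pos : 0 < a'
  b'_pos : 0 < b'
  c'_pos : 0 < c'
  d'_pos : 0 < d'
  e'_pos : 0 < e'
  rel_d : 1 + d' = (1 + a) * (1 + c) * (1 + f)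
  rel_b : b' * d' = (1 + a) * c * e + a * (b + e + b * e)
  rel_a : a' * b' * d' = a * b * d
  rel_e : (1 + b') * (1 + e') = (1 + b) * (1 + e)
  rel_c : c' * e' * (a * (1 + a')) = c * e * (a' * (1 + a))
  rel_f : (1 + a') * (1 + c') * (1 + f') = 1 + d

theorem SixRel.unique {a b c d e f a₁ b₁ c₁ d₁ e₁ f₁ a₂ b₂ c₂ d₂ e₂ f₂ : ℝ}
    (h₁ : SixRel a b c d e f a₁ b₁ c₁ d₁ e₁ f₁) (h₂ : SixRel a b c d e f a₂ b₂ c₂ d₂ e₂ f₂) :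
    a₁ = a₂ ∧ b₁ = b₂ ∧ c₁ = c₂ ∧ d₁ = d₂ ∧ e₁ = e₂ ∧ f₁ = f₂ := by
  obtain ⟨ha, ha₁, hb₁, hc₁, hd₁, he₁, rd₁, rb₁, ra₁, re₁, rc₁, rf₁⟩ := h₁
  obtain ⟨-, ha₂, hb₂, hc₂, hd₂, he₂, rd₂, rb₂, ra₂, re₂, rc₂, rf₂⟩ := h₂
  obtain rfl : d₁ = d₂ := by linarith
  obtain rfl : b₁ = b₂ := mul_right_cancel₀ hd₁.ne' (rb₁.trans rb₂.symm)
  obtain rfl : a₁ = a₂ :=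
    mul_right_cancel₀ hb₁.ne' (mul_right_cancel₀ hd₁.ne' (ra₁.trans ra₂.symm))
  obtain rfl : e₁ = e₂ := by
    have h := mul_left_cancel₀ (by positivity) (re₁.trans re₂.symm)
    linarith
  obtain rfl : c₁ = c₂ :=
    mul_right_cancel₀ he₁.ne' (mul_right_cancel₀ (by positivity) (rc₁.trans rc₂.symm))
  obtain rfl : f₁ = f₂ := by
    have h := mul_left_cancel₀ (by positivity) (rf₁.trans rf₂.symm)
    linarith
  exact ⟨rfl, rfl, rfl, rfl, rfl, rfl⟩

/-- The order `123`, `145`, `246`, `356` of application, i.e. the right-hand side of the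
tetrahedron equation. -/
theorem sixRel_of_123_first {a b c d e f a₁ b₁ c₁ a₂ d₁ e₁ b₂ d₂ f₁ c₂ e₂ f₂ : ℝ}
    (h₁ : KPRel a b c a₁ b₁ c₁) (h₂ : KPRel a₁ d e a₂ d₁ e₁)
    (h₃ : KPRel b₁ d₁ f b₂ d₂ f₁) (h₄ : KPRel c₁ e₁ f₁ c₂ e₂ f₂) :
    SixRel a b c d e f a₂ b₂ c₂ d₂ e₂ f₂ := by
  obtain ⟨ha, hb, hc, ha₁, hb₁, hc₁, p₁, q₁, r₁, s₁⟩ := h₁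
  obtain ⟨-, hd, he, ha₂, hd₁, he₁, p₂, q₂, r₂, s₂⟩ := h₂
  obtain ⟨-, -, hf, hb₂, hd₂, hf₁, p₃, q₃, r₃, s₃⟩ := h₃
  obtain ⟨-, -, -, hc₂, he₂, hf₂, p₄, q₄, r₄, s₄⟩ := h₄
  refine ⟨ha, ha₂, hb₂, hc₂, hd₂, he₂, ?_, ?_, ?_, ?_, ?_, ?_⟩
  · rw [p₃, p₁]
  · linear_combination r₃ + b₁ * p₂ + (1 + e) * r₁ + e * p₁
  · linear_combination a₂ * r₃ + b₁ * r₂ + d * r₁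
  · linear_combination (1 + b₂) * p₄ + (1 + c₁) * q₃ + (1 + c₁) * p₂ + (1 + e) * q₁
  · -- The factor `a₁ / (1 + a₁)` cancels between the relations for `c₁` and `e₁`.
    refine mul_right_cancel₀ (b := a₁ * (1 + a₁)) (by positivity) ?_
    linear_combination a * (1 + a₂) * a₁ * (1 + a₁) * r₄ + e₁ * a₁ * (1 + a₂) * s₁
      + c * a₁ * (1 + a) * s₂
  · linear_combination (1 + a₂) * q₄ + q₂

/-- The order `356`, `246`, `145`, `123` of application, i.e. the left-hand side of the
tetrahedron equation. -/
theorem sixRel_of_356_first {a b c d e f c₁ e₁ f₁ b₁ d₁ f₂ a₁ d₂ e₂ a₂ b₂ c₂ : ℝ}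
    (h₁ : KPRel c e f c₁ e₁ f₁) (h₂ : KPRel b d f₁ b₁ d₁ f₂)
    (h₃ : KPRel a d₁ e₁ a₁ d₂ e₂) (h₄ : KPRel a₁ b₁ c₁ a₂ b₂ c₂) :
    SixRel a b c d e f a₂ b₂ c₂ d₂ e₂ f₂ := by
  obtain ⟨hc, he, hf, hc₁, he₁, hf₁, p₁, q₁, r₁, s₁⟩ := h₁
  obtain ⟨hb, hd, -, hb₁, hd₁, hf₂, p₂, q₂, r₂, s₂⟩ := h₂
  obtain ⟨ha, -, -, ha₁, hd₂, he₂, p₃, q₃, r₃, s₃⟩ := h₃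
  obtain ⟨-, -, -, ha₂, hb₂, hc₂, p₄, q₄, r₄, s₄⟩ := h₄
  refine ⟨ha, ha₂, hb₂, hc₂, hd₂, he₂, ?_, ?_, ?_, ?_, ?_, ?_⟩
  · rw [p₃, p₁, mul_assoc]
  · linear_combination d₂ * p₄ + (1 + c₁) * r₃ + a * (1 + c₁) * p₂ + a * (1 + b) * q₁
      + c₁ * p₃ + (1 + a) * r₁
  · linear_combination d₂ * r₄ + b₁ * r₃ + a * r₂
  · linear_combination (1 + e₂) * p₄ + (1 + c₁) * q₃ + (1 + c₁) * p₂ + (1 + b) * q₁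
  · refine mul_right_cancel₀ (b := a₁ * (1 + a₁)) (by positivity) ?_
    linear_combination e₂ * a * (1 + a₁) * s₄ + c₁ * a₂ * (1 + a₁) * s₃
      + a₁ * (1 + a₁) * a₂ * (1 + a) * r₁
  · linear_combination (1 + f₂) * q₄ + q₂

/-- `jointKPMap` satisfies the functional tetrahedron equation. -/
theorem jointKPMap_tetrahedron : IsTetrahedron jointKPMap := by
  funext ⟨a, b, c, d, e, f⟩
  have h := SixRel.unique
    (sixRel_of_356_first (jointKPMap_rel c e f) (jointKPMap_rel b d _) (jointKPMap_rel a _ _)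
      (jointKPMap_rel _ _ _))
    (sixRel_of_123_first (jointKPMap_rel a b c) (jointKPMap_rel _ d e) (jointKPMap_rel _ _ f)
      (jointKPMap_rel _ _ _))
  simpa only [Function.comp_apply, map123, map145, map246, map356, Prod.mk.injEq, Subtype.ext_iff]
    using h
end
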